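/- arXiv:2008.03204 — 2 statements merged into one kernel-verified Lean document; each statement's English description precedes it below -/
import Mathlib

section
/- Let H ∈ [0,1/2), ζ > 0, p > 1, C > 0, χ := e^{−1/ζ}. Let 0 ≤ u < t < 1 and set v := (u ∨ χ) ∧ t. Then ∫ᵤᵗ K(r) dr = C ζ^{−p} [ (log(1/v))^{1−p} E_p( (H+1/2) log(1/v) ) − 𝟙_{u>0} (log(1/u))^{1−p} E_p( (H+1/2) log(1/u) ) ] + C ( t^{H+1/2} − v^{H+1/2} )/( H+1/2 ). (Up to the factor ρ, with u := t − t∧s, this equals the covariance of Ŵ_t with a ρ-correlated Brownian motion B_s.) -/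
open MeasureTheory

/-- The exponential integral `E_b(x) = ∫₁^∞ e^{-x t} t^{-b} dt`. -/
noncomputable def expIntegralE (b x : ℝ) : ℝ :=
  ∫ t in Set.Ioi (1 : ℝ), Real.exp (-x * t) * t ^ (-b)

/-- The log-modulated kernel `K(r) = C r^{H-1/2} max(ζ log(1/r), 1)^{-p}`. -/
noncomputable def logKernel (H ζ p C r : ℝ) : ℝ :=
  C * r ^ (H - 1/2) * (max (ζ * Real.log (1 / r)) 1) ^ (-p)

/-! Below the cutoff `χ` the kernel is a multiple of `r ^ (a - 1) * log (1 / r) ^ (-p)` with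
`a = H + 1/2`, above it a multiple of the pure power `r ^ (a - 1)`, so the integral splits at `v`.
The substitution `r = exp (-s)` turns the integral of the first function over `(0, x)` into
`∫ s in (L, ∞), exp (-a s) s ^ (-p)` with `L = log (1 / x)`, and rescaling `s = L t` gives
`L ^ (1 - p) * E_p (a L)`; integrability comes from the exponential decay in `s`. -/

section ExpNegSubstitution

open Real Set

variable {E : Type*} [NormedAddCommGroup E] [NormedSpace ℝ E]

theorem image_exp_neg_Ioi (c : ℝ) : (fun s : ℝ => exp (-s)) '' Ioi c = Ioo 0 (exp (-c)) := by
  rw [← image_exp_Iio, ← image_neg_Ioi, image_image]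

theorem hasDerivWithinAt_exp_neg (S : Set ℝ) (s : ℝ) :
    HasDerivWithinAt (fun s : ℝ => exp (-s)) (-exp (-s)) S s := by
  simpa using (hasDerivAt_neg s).exp.hasDerivWithinAt

theorem injective_exp_neg : Function.Injective fun s : ℝ => exp (-s) :=
  exp_injective.comp neg_injective

theorem integrableOn_comp_exp_neg_Ioi_iff (g : ℝ → E) (c : ℝ) :
    IntegrableOn (fun s => exp (-s) • g (exp (-s))) (Ioi c) ↔
      IntegrableOn g (Ioo 0 (exp (-c))) := by
  simpa only [image_exp_neg_Ioi, abs_neg, abs_exp] using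
    (integrableOn_image_iff_integrableOn_abs_deriv_smul measurableSet_Ioi
      (fun s _ => hasDerivWithinAt_exp_neg (Ioi c) s) injective_exp_neg.injOn g).symm

theorem integral_comp_exp_neg_Ioi (g : ℝ → E) (c : ℝ) :
    ∫ s in Ioi c, exp (-s) • g (exp (-s)) = ∫ r in Ioo 0 (exp (-c)), g r := by
  simpa only [image_exp_neg_Ioi, abs_neg, abs_exp] using
    (integral_image_eq_integral_abs_deriv_smul measurableSet_Ioi
      (fun s _ => hasDerivWithinAt_exp_neg (Ioi c) s) injective_exp_neg.injOn g).symm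

end ExpNegSubstitution

section ExpIntegral

open Real Set Filter Asymptotics

theorem integrableOn_exp_neg_mul_mul_rpow_Ioi {a c : ℝ} (ha : 0 < a) (hc : 0 < c) (q : ℝ) :
    IntegrableOn (fun s : ℝ => exp (-a * s) * s ^ q) (Ioi c) := by
  have hcont : ContinuousOn (fun s : ℝ => exp (-a * s) * s ^ q) (Ici c) := fun s hs =>
    (ContinuousAt.mul (by fun_prop)
      (continuousAt_rpow_const s q (.inl (hc.trans_le hs).ne'))).continuousWithinAt
  refine integrable_of_isBigO_exp_neg (half_pos ha) hcont ?_
  have hrpow : (fun s : ℝ => s ^ q) =O[atTop] fun s => exp (a / 2 * s) :=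
    (isLittleO_rpow_exp_pos_mul_atTop q (half_pos ha)).isBigO
  refine ((isBigO_refl (fun s => exp (-a * s)) atTop).mul hrpow).congr_right fun s => ?_
  rw [← exp_add]
  ring_nf

theorem integral_exp_neg_mul_mul_rpow_neg_Ioi (a p : ℝ) {L : ℝ} (hL : 0 < L) :
    ∫ s in Ioi L, exp (-a * s) * s ^ (-p) = L ^ (1 - p) * expIntegralE p (a * L) := by
  have hscale : ∫ s in Ioi L, exp (-a * s) * s ^ (-p)
      = L * ∫ t in Ioi 1, exp (-a * (L * t)) * (L * t) ^ (-p) := by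
    simpa using (integral_comp_mul_left_Ioi' (fun s => exp (-a * s) * s ^ (-p)) 1 hL).symm
  have hfactor : ∀ t ∈ Ioi (1 : ℝ), exp (-a * (L * t)) * (L * t) ^ (-p)
      = L ^ (-p) * (exp (-(a * L) * t) * t ^ (-p)) := fun t ht => by
    rw [mul_rpow hL.le (zero_le_one.trans ht.le)]
    ring_nf
  rw [hscale, setIntegral_congr_fun measurableSet_Ioi hfactor, integral_const_mul, ← mul_assoc,
    sub_eq_add_neg, rpow_add hL, rpow_one, expIntegralE]

theorem exp_neg_mul_rpow_mul_log_rpow (a p s : ℝ) :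
    exp (-s) * (exp (-s) ^ (a - 1) * log (1 / exp (-s)) ^ (-p)) = exp (-a * s) * s ^ (-p) := by
  rw [one_div, log_inv, log_exp, neg_neg, ← exp_mul, ← mul_assoc, ← exp_add]
  ring_nf

variable {a x : ℝ}

theorem integrableOn_rpow_mul_log_rpow_Ioo (ha : 0 < a) (p : ℝ) (hx0 : 0 < x) (hx1 : x < 1) :
    IntegrableOn (fun r : ℝ => r ^ (a - 1) * log (1 / r) ^ (-p)) (Ioo 0 x) := by
  rw [← exp_log hx0, ← neg_neg (log x), ← integrableOn_comp_exp_neg_Ioi_iff]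
  simp only [smul_eq_mul, exp_neg_mul_rpow_mul_log_rpow]
  exact integrableOn_exp_neg_mul_mul_rpow_Ioi ha (neg_pos.mpr (log_neg hx0 hx1)) (-p)

theorem intervalIntegrable_rpow_mul_log_rpow (ha : 0 < a) (p : ℝ) (hx0 : 0 ≤ x) (hx1 : x < 1) :
    IntervalIntegrable (fun r : ℝ => r ^ (a - 1) * log (1 / r) ^ (-p)) volume 0 x := by
  obtain rfl | hx0 := hx0.eq_or_lt
  · exact .refl
  · exact (intervalIntegrable_iff_integrableOn_Ioo_of_le hx0.le).mpr
      (integrableOn_rpow_mul_log_rpow_Ioo ha p hx0 hx1)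

theorem integral_zero_rpow_mul_log_rpow (a p : ℝ) (hx0 : 0 < x) (hx1 : x < 1) :
    ∫ r in 0..x, r ^ (a - 1) * log (1 / r) ^ (-p)
      = log (1 / x) ^ (1 - p) * expIntegralE p (a * log (1 / x)) := by
  have hx : x = exp (-log (1 / x)) := by rw [one_div, log_inv, neg_neg, exp_log hx0]
  have hL : 0 < log (1 / x) := log_pos ((one_lt_div hx0).mpr hx1)
  calc ∫ r in 0..x, r ^ (a - 1) * log (1 / r) ^ (-p)
      = ∫ r in Ioo 0 (exp (-log (1 / x))), r ^ (a - 1) * log (1 / r) ^ (-p) := by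
        rw [← hx, intervalIntegral.integral_of_le hx0.le, integral_Ioc_eq_integral_Ioo]
    _ = ∫ s in Ioi (log (1 / x)), exp (-a * s) * s ^ (-p) := by
        rw [← integral_comp_exp_neg_Ioi]
        simp only [smul_eq_mul, exp_neg_mul_rpow_mul_log_rpow]
    _ = log (1 / x) ^ (1 - p) * expIntegralE p (a * log (1 / x)) :=
        integral_exp_neg_mul_mul_rpow_neg_Ioi a p hL

theorem integral_rpow_mul_log_rpow {u v : ℝ} (ha : 0 < a) (p : ℝ)
    (hu0 : 0 ≤ u) (hu1 : u < 1) (hv0 : 0 < v) (hv1 : v < 1) :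
    ∫ r in u..v, r ^ (a - 1) * log (1 / r) ^ (-p)
      = log (1 / v) ^ (1 - p) * expIntegralE p (a * log (1 / v))
        - if 0 < u then log (1 / u) ^ (1 - p) * expIntegralE p (a * log (1 / u)) else 0 := by
  rw [← intervalIntegral.integral_interval_sub_left
      (intervalIntegrable_rpow_mul_log_rpow ha p hv0.le hv1)
      (intervalIntegrable_rpow_mul_log_rpow ha p hu0 hu1),
    integral_zero_rpow_mul_log_rpow a p hv0 hv1]
  congr 1
  split_ifs with hu
  · exact integral_zero_rpow_mul_log_rpow a p hu hu1
  · rw [hu0.antisymm' (not_lt.mp hu), intervalIntegral.integral_same]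

end ExpIntegral

section LogKernel

open Real Set

variable {ζ r u v t : ℝ} (H p C : ℝ)

theorem one_le_mul_log_one_div_iff (hζ : 0 < ζ) (hr : 0 < r) :
    1 ≤ ζ * log (1 / r) ↔ r ≤ exp (-1 / ζ) := by
  rw [← log_le_iff_le_exp hr, le_div_iff₀ hζ, one_div, log_inv, mul_neg, le_neg, mul_comm]

theorem logKernel_of_le (hζ : 0 < ζ) (hr : 0 < r) (hrχ : r ≤ exp (-1 / ζ)) :
    logKernel H ζ p C r = C * ζ ^ (-p) * (r ^ (H - 1 / 2) * log (1 / r) ^ (-p)) := by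
  have hmax : 1 ≤ ζ * log (1 / r) := (one_le_mul_log_one_div_iff hζ hr).mpr hrχ
  have hlog : 0 ≤ log (1 / r) := nonneg_of_mul_nonneg_right (zero_le_one.trans hmax) hζ
  rw [logKernel, max_eq_left hmax, mul_rpow hζ.le hlog]
  ring

theorem logKernel_of_lt (hζ : 0 < ζ) (hχr : exp (-1 / ζ) < r) :
    logKernel H ζ p C r = C * r ^ (H - 1 / 2) := by
  have hmax : ζ * log (1 / r) < 1 :=
    lt_of_not_ge ((one_le_mul_log_one_div_iff hζ ((exp_pos _).trans hχr)).not.mpr hχr.not_ge)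
  rw [logKernel, max_eq_right hmax.le, one_rpow, mul_one]

-- `v ≤ max u χ` says that `v ≤ χ` unless `(u, v)` is empty; dually for `min χ t ≤ v` and `(v, t)`.
theorem eqOn_logKernel_of_le_max (hζ : 0 < ζ) (hu : 0 ≤ u) (huv : u ≤ v)
    (hv : v ≤ max u (exp (-1 / ζ))) :
    EqOn (logKernel H ζ p C) (fun r => C * ζ ^ (-p) * (r ^ (H - 1 / 2) * log (1 / r) ^ (-p)))
      (uIoo u v) := by
  rw [uIoo_of_le huv]
  rintro r ⟨hur, hrv⟩
  have hrχ : r < exp (-1 / ζ) := (lt_max_iff.mp (hrv.trans_le hv)).resolve_left hur.not_gt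
  exact logKernel_of_le H p C hζ (hu.trans_lt hur) hrχ.le

theorem eqOn_logKernel_of_min_le (hζ : 0 < ζ) (hvt : v ≤ t) (hv : min (exp (-1 / ζ)) t ≤ v) :
    EqOn (logKernel H ζ p C) (fun r => C * r ^ (H - 1 / 2)) (uIoo v t) := by
  rw [uIoo_of_le hvt]
  rintro r ⟨hvr, hrt⟩
  exact logKernel_of_lt H p C hζ ((min_lt_iff.mp (hv.trans_lt hvr)).resolve_right hrt.not_gt)

theorem max_exp_neg_one_div_lt_one (hζ : 0 < ζ) (hu : u < 1) : max u (exp (-1 / ζ)) < 1 :=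
  max_lt hu (exp_lt_one_iff.mpr (div_neg_of_neg_of_pos neg_one_lt_zero hζ))

variable {H}

theorem intervalIntegrable_logKernel_of_le_max (hH : -1 / 2 < H) (hζ : 0 < ζ) (hu0 : 0 ≤ u)
    (hu1 : u < 1) (huv : u ≤ v) (hv : v ≤ max u (exp (-1 / ζ))) :
    IntervalIntegrable (logKernel H ζ p C) volume u v := by
  have hv1 : v < 1 := hv.trans_lt (max_exp_neg_one_div_lt_one hζ hu1)
  have ha : 0 < H + 1 / 2 := by linarith
  have hint := (intervalIntegrable_rpow_mul_log_rpow ha p hu0 hu1).symm.trans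
    (intervalIntegrable_rpow_mul_log_rpow ha p (hu0.trans huv) hv1)
  rw [show H + 1 / 2 - 1 = H - 1 / 2 by ring] at hint
  exact (hint.const_mul _).congr_uIoo (eqOn_logKernel_of_le_max H p C hζ hu0 huv hv).symm

theorem intervalIntegrable_logKernel_of_min_le (hH : -1 / 2 < H) (hζ : 0 < ζ) (hvt : v ≤ t)
    (hv : min (exp (-1 / ζ)) t ≤ v) : IntervalIntegrable (logKernel H ζ p C) volume v t :=
  ((intervalIntegral.intervalIntegrable_rpow' (by linarith)).const_mul C).congr_uIoo
    (eqOn_logKernel_of_min_le H p C hζ hvt hv).symm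

theorem integral_logKernel_of_le_max (hH : -1 / 2 < H) (hζ : 0 < ζ) (hu0 : 0 ≤ u) (hu1 : u < 1)
    (huv : u ≤ v) (hv0 : 0 < v) (hv : v ≤ max u (exp (-1 / ζ))) :
    ∫ r in u..v, logKernel H ζ p C r
      = C * ζ ^ (-p) * (log (1 / v) ^ (1 - p) * expIntegralE p ((H + 1 / 2) * log (1 / v))
        - if 0 < u then log (1 / u) ^ (1 - p) * expIntegralE p ((H + 1 / 2) * log (1 / u))
          else 0) := by
  have hv1 : v < 1 := hv.trans_lt (max_exp_neg_one_div_lt_one hζ hu1)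
  rw [intervalIntegral.integral_congr_uIoo (eqOn_logKernel_of_le_max H p C hζ hu0 huv hv),
    intervalIntegral.integral_const_mul, show H - 1 / 2 = H + 1 / 2 - 1 by ring,
    integral_rpow_mul_log_rpow (by linarith) p hu0 hu1 hv0 hv1]

theorem integral_logKernel_of_min_le (hH : -1 / 2 < H) (hζ : 0 < ζ) (hvt : v ≤ t)
    (hv : min (exp (-1 / ζ)) t ≤ v) :
    ∫ r in v..t, logKernel H ζ p C r
      = C * (t ^ (H + 1 / 2) - v ^ (H + 1 / 2)) / (H + 1 / 2) := by
  rw [intervalIntegral.integral_congr_uIoo (eqOn_logKernel_of_min_le H p C hζ hvt hv),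
    intervalIntegral.integral_const_mul, integral_rpow (.inl (by linarith)),
    show H - 1 / 2 + 1 = H + 1 / 2 by ring, mul_div_assoc]

end LogKernel

theorem integrated_kernel_formula_general (H ζ p C : ℝ) (hH : -1 / 2 < H) (hζ : 0 < ζ)
    (χ : ℝ) (hχ : χ = Real.exp (-1 / ζ))
    (u t : ℝ) (hu0 : 0 ≤ u) (hut : u < t) (hu1 : u < 1)
    (v : ℝ) (hv : v = min (max u χ) t) :
    ∫ r in u..t, logKernel H ζ p C r
      = C * ζ ^ (-p) *
          ((Real.log (1 / v)) ^ (1 - p) * expIntegralE p ((H + 1 / 2) * Real.log (1 / v))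
            - (if 0 < u then
                (Real.log (1 / u)) ^ (1 - p) * expIntegralE p ((H + 1 / 2) * Real.log (1 / u))
              else 0))
        + C * (t ^ (H + 1 / 2) - v ^ (H + 1 / 2)) / (H + 1 / 2) := by
  subst hχ
  have huv : u ≤ v := hv ▸ le_min (le_max_left _ _) hut.le
  have hvt : v ≤ t := hv ▸ min_le_right _ _
  have hv0 : 0 < v := hv ▸ lt_min (lt_max_of_lt_right (Real.exp_pos _)) (hu0.trans_lt hut)
  have hv_le : v ≤ max u (Real.exp (-1 / ζ)) := hv ▸ min_le_left _ _
  have hle_v : min (Real.exp (-1 / ζ)) t ≤ v := hv ▸ min_le_min_right t (le_max_right _ _)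
  rw [← intervalIntegral.integral_add_adjacent_intervals
      (intervalIntegrable_logKernel_of_le_max p C hH hζ hu0 hu1 huv hv_le)
      (intervalIntegrable_logKernel_of_min_le p C hH hζ hvt hle_v),
    integral_logKernel_of_le_max p C hH hζ hu0 hu1 huv hv0 hv_le,
    integral_logKernel_of_min_le p C hH hζ hvt hle_v]

theorem integrated_kernel_formula (H ζ p C : ℝ) (hH0 : 0 ≤ H) (hH : H < 1/2)
    (hζ : 0 < ζ) (hp : 1 < p) (hC : 0 < C) (χ : ℝ) (hχ : χ = Real.exp (-1/ζ))
    (u t : ℝ) (hu : 0 ≤ u) (hut : u < t) (ht : t < 1)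
    (v : ℝ) (hv : v = min (max u χ) t) :
    ∫ r in u..t, logKernel H ζ p C r
      = C * ζ ^ (-p) *
          ((Real.log (1 / v)) ^ (1 - p) * expIntegralE p ((H + 1/2) * Real.log (1 / v))
            - (if 0 < u then
                (Real.log (1 / u)) ^ (1 - p) * expIntegralE p ((H + 1/2) * Real.log (1 / u))
              else 0))
        + C * (t ^ (H + 1/2) - v ^ (H + 1/2)) / (H + 1/2) :=
  integrated_kernel_formula_general H ζ p C (by linarith) hζ χ hχ u t hu hut (hut.trans ht) v hv
end

section
/- Let H ∈ [0,1/2), ζ > 0, p > 1, C > 0. As t → 0⁺, ∫₀ᵗ K(s) ds ∼ ( C ζ^{−p} / (H+1/2) ) · (log(1/t))^{−p} · t^{H+1/2}. -/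
open MeasureTheory Filter

/-!
Near zero the maximum in the kernel is `ζ log (1/r)`, so up to a constant factor the kernel is
`r ^ (a - 1) * log (1/r) ^ q` with `a = H + 1/2` and `q = -p`. The function
`t ^ a * log (1/t) ^ q` vanishes at zero and has derivative
`t ^ (a - 1) * log (1/t) ^ q * (a - q / log (1/t))`, which is equivalent to `a` times the kernel
because the logarithm blows up. Equivalence with a nonnegative integrable function passes to
primitives.
-/

open Set Asymptotics
open scoped Topology

section PrimitiveAsymptotics

variable {E : Type*} [NormedAddCommGroup E] {a : ℝ}

lemma tendsto_Ioc_smallSets_nhdsGT (a : ℝ) :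
    Tendsto (fun t => Ioc a t) (𝓝[>] a) (𝓝[>] a).smallSets :=
  (tendsto_const_nhdsWithin self_mem_Ici : Tendsto (fun _ => a) (𝓝[>] a) (𝓝[≥] a)).Ioc
    (tendsto_id.mono_right (nhdsWithin_mono a Ioi_subset_Ici_self))

lemma eventually_forall_Ioc_nhdsGT {P : ℝ → Prop} (hP : ∀ᶠ s in 𝓝[>] a, P s) :
    ∀ᶠ t in 𝓝[>] a, ∀ s ∈ Ioc a t, P s :=
  (tendsto_Ioc_smallSets_nhdsGT a).eventually hP.smallSets

lemma eventually_intervalIntegrable_nhdsGT {f : ℝ → E}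
    (hf : IntegrableAtFilter f (𝓝[>] a)) :
    ∀ᶠ t in 𝓝[>] a, IntervalIntegrable f volume a t := by
  filter_upwards [(tendsto_Ioc_smallSets_nhdsGT a).eventually hf.eventually,
    self_mem_nhdsWithin] with t hft hat
  exact (intervalIntegrable_iff_integrableOn_Ioc_of_le (le_of_lt hat)).2 hft

lemma eventuallyEq_intervalIntegral_nhdsGT [NormedSpace ℝ E] {f g : ℝ → E}
    (hfg : f =ᶠ[𝓝[>] a] g) :
    (fun t => ∫ s in a..t, f s) =ᶠ[𝓝[>] a] fun t => ∫ s in a..t, g s := by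
  filter_upwards [eventually_forall_Ioc_nhdsGT hfg, self_mem_nhdsWithin] with t hfgt hat
  refine intervalIntegral.integral_congr_ae (ae_of_all _ fun s hs => hfgt s ?_)
  rwa [uIoc_of_le (le_of_lt hat)] at hs

lemma isLittleO_intervalIntegral_nhdsGT [NormedSpace ℝ E] {f : ℝ → E} {g : ℝ → ℝ}
    (hfg : f =o[𝓝[>] a] g) (hg_nonneg : ∀ᶠ t in 𝓝[>] a, 0 ≤ g t)
    (hg : IntegrableAtFilter g (𝓝[>] a)) :
    (fun t => ∫ s in a..t, f s) =o[𝓝[>] a] fun t => ∫ s in a..t, g s := by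
  refine isLittleO_iff.2 fun ε hε => ?_
  filter_upwards [eventually_forall_Ioc_nhdsGT (hfg.bound hε),
    eventually_forall_Ioc_nhdsGT hg_nonneg, eventually_intervalIntegrable_nhdsGT hg,
    self_mem_nhdsWithin] with t hfgt hgt_nonneg hgt hat
  have hat : a ≤ t := le_of_lt hat
  calc ‖∫ s in a..t, f s‖
      ≤ ∫ s in a..t, ε * g s := by
        refine intervalIntegral.norm_integral_le_of_norm_le hat (ae_of_all _ fun s hs => ?_)
          (hgt.const_mul ε)
        simpa only [Real.norm_of_nonneg (hgt_nonneg s hs)] using hfgt s hs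
    _ = ε * ∫ s in a..t, g s := intervalIntegral.integral_const_mul ε g
    _ ≤ ε * ‖∫ s in a..t, g s‖ := by gcongr; exact Real.le_norm_self _

lemma isEquivalent_intervalIntegral_nhdsGT {f g : ℝ → ℝ} (hfg : f ~[𝓝[>] a] g)
    (hf : StronglyMeasurableAtFilter f (𝓝[>] a)) (hg_nonneg : ∀ᶠ t in 𝓝[>] a, 0 ≤ g t)
    (hg : IntegrableAtFilter g (𝓝[>] a)) :
    (fun t => ∫ s in a..t, f s) ~[𝓝[>] a] fun t => ∫ s in a..t, g s := by
  have hf_int : IntegrableAtFilter f (𝓝[>] a) := hfg.isBigO.integrableAtFilter hf hg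
  refine (isLittleO_intervalIntegral_nhdsGT hfg.isLittleO hg_nonneg hg).congr' ?_ .rfl
  filter_upwards [eventually_intervalIntegrable_nhdsGT hf_int,
    eventually_intervalIntegrable_nhdsGT hg] with t hft hgt
  exact intervalIntegral.integral_sub hft hgt

lemma integrableAtFilter_deriv_of_nonneg_nhdsGT {c : ℝ} {G G' : ℝ → ℝ}
    (hG : Tendsto G (𝓝[>] a) (𝓝 c)) (hderiv : ∀ᶠ t in 𝓝[>] a, HasDerivAt G (G' t) t)
    (hG'_nonneg : ∀ᶠ t in 𝓝[>] a, 0 ≤ G' t) :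
    IntegrableAtFilter G' (𝓝[>] a) := by
  obtain ⟨b, hb, hab⟩ := ((eventually_forall_Ioc_nhdsGT (hderiv.and hG'_nonneg)).and
    self_mem_nhdsWithin).exists
  refine ⟨Ioc a b, Ioc_mem_nhdsGT hab, ?_⟩
  have hderiv_update : ∀ t ∈ Ioc a b, HasDerivAt (Function.update G a c) (G' t) t :=
    fun t ht => (hb t ht).1.congr_of_eventuallyEq <| by
      filter_upwards [eventually_ne_nhds ht.1.ne'] with s hs
      exact Function.update_of_ne hs _ _
  have hcont : ContinuousOn (Function.update G a c) (Icc a b) := by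
    rw [continuousOn_update_iff, Icc_sdiff_left]
    exact ⟨fun t ht => (hb t ht).1.continuousAt.continuousWithinAt,
      fun _ => hG.mono_left (nhdsWithin_mono a Ioc_subset_Ioi_self)⟩
  exact intervalIntegral.integrableOn_deriv_of_nonneg hcont
    (fun t ht => hderiv_update t (Ioo_subset_Ioc_self ht))
    (fun t ht => (hb t (Ioo_subset_Ioc_self ht)).2)

lemma eventually_integral_deriv_eq_sub_nhdsGT [NormedSpace ℝ E] [CompleteSpace E] {c : E}
    {G G' : ℝ → E} (hG : Tendsto G (𝓝[>] a) (𝓝 c))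
    (hderiv : ∀ᶠ t in 𝓝[>] a, HasDerivAt G (G' t) t)
    (hG' : IntegrableAtFilter G' (𝓝[>] a)) :
    ∀ᶠ t in 𝓝[>] a, ∫ s in a..t, G' s = G t - c := by
  filter_upwards [eventually_forall_Ioc_nhdsGT hderiv, eventually_intervalIntegrable_nhdsGT hG',
    self_mem_nhdsWithin] with t hderiv_t hG't hat
  exact intervalIntegral.integral_eq_sub_of_hasDerivAt_of_tendsto hat
    (fun s hs => hderiv_t s (Ioo_subset_Ioc_self hs)) hG't hG
    ((hderiv_t t (right_mem_Ioc.2 hat)).continuousAt.tendsto.mono_left nhdsWithin_le_nhds)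

theorem isEquivalent_intervalIntegral_of_isEquivalent_deriv {f G G' : ℝ → ℝ}
    (hf : StronglyMeasurableAtFilter f (𝓝[>] a)) (hfG' : f ~[𝓝[>] a] G')
    (hG : Tendsto G (𝓝[>] a) (𝓝 0)) (hderiv : ∀ᶠ t in 𝓝[>] a, HasDerivAt G (G' t) t)
    (hG'_nonneg : ∀ᶠ t in 𝓝[>] a, 0 ≤ G' t) :
    (fun t => ∫ s in a..t, f s) ~[𝓝[>] a] G := by
  have hG' : IntegrableAtFilter G' (𝓝[>] a) :=
    integrableAtFilter_deriv_of_nonneg_nhdsGT hG hderiv hG'_nonneg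
  refine (isEquivalent_intervalIntegral_nhdsGT hfG' hf hG'_nonneg hG').congr_right ?_
  simpa only [sub_zero] using! eventually_integral_deriv_eq_sub_nhdsGT hG hderiv hG'

end PrimitiveAsymptotics

section LogPower

lemma tendsto_log_one_div_nhdsGT_zero :
    Tendsto (fun t : ℝ => Real.log (1 / t)) (𝓝[>] 0) atTop := by
  simpa only [one_div] using! Real.tendsto_log_atTop.comp tendsto_inv_nhdsGT_zero

lemma tendsto_rpow_mul_log_one_div_rpow_nhdsGT_zero {a : ℝ} (ha : 0 < a) (q : ℝ) :
    Tendsto (fun t : ℝ => t ^ a * Real.log (1 / t) ^ q) (𝓝[>] 0) (𝓝 0) := by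
  refine ((tendsto_rpow_mul_exp_neg_mul_atTop_nhds_zero q a ha).comp
    tendsto_log_one_div_nhdsGT_zero).congr' ?_
  filter_upwards [self_mem_nhdsWithin] with t ht
  have hexp : Real.exp (-a * Real.log (1 / t)) = t ^ a := by
    rw [Real.rpow_def_of_pos ht, one_div, Real.log_inv]
    ring_nf
  rw [Function.comp_apply, hexp, mul_comm]

lemma hasDerivAt_rpow_mul_log_one_div_rpow (a q : ℝ) {t : ℝ} (ht : t ≠ 0)
    (hlog : Real.log (1 / t) ≠ 0) :
    HasDerivAt (fun t : ℝ => t ^ a * Real.log (1 / t) ^ q)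
      (t ^ (a - 1) * Real.log (1 / t) ^ q * (a - q / Real.log (1 / t))) t := by
  have hlog_deriv : HasDerivAt (fun t : ℝ => Real.log (1 / t)) (-t⁻¹) t := by
    simpa only [one_div, Real.log_inv] using! (Real.hasDerivAt_log ht).neg
  refine ((Real.hasDerivAt_rpow_const (p := a) (Or.inl ht)).mul
    (hlog_deriv.rpow_const (p := q) (Or.inl hlog))).congr_deriv ?_
  rw [Real.rpow_sub_one ht, Real.rpow_sub_one hlog]
  field_simp
  ring

lemma tendsto_sub_div_log_one_div_nhdsGT_zero (a q : ℝ) :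
    Tendsto (fun t : ℝ => a - q / Real.log (1 / t)) (𝓝[>] 0) (𝓝 a) := by
  simpa only [sub_zero] using (tendsto_log_one_div_nhdsGT_zero.const_div_atTop q).const_sub a

theorem isEquivalent_integral_rpow_mul_log_one_div_rpow {a : ℝ} (ha : 0 < a) (q : ℝ) :
    (fun t : ℝ => ∫ s in (0 : ℝ)..t, s ^ (a - 1) * Real.log (1 / s) ^ q) ~[𝓝[>] 0]
      fun t => t ^ a * Real.log (1 / t) ^ q / a := by
  have hfactor := tendsto_sub_div_log_one_div_nhdsGT_zero a q
  have hlog_pos : ∀ᶠ t : ℝ in 𝓝[>] 0, 0 < Real.log (1 / t) :=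
    tendsto_log_one_div_nhdsGT_zero.eventually_gt_atTop 0
  refine isEquivalent_intervalIntegral_of_isEquivalent_deriv
    (G' := fun t => t ^ (a - 1) * Real.log (1 / t) ^ q * (a - q / Real.log (1 / t)) / a)
    (by fun_prop : Measurable _).stronglyMeasurable.stronglyMeasurableAtFilter ?_ ?_ ?_ ?_
  · have hfactor_equiv :
        (fun t : ℝ => (a - q / Real.log (1 / t)) / a) ~[𝓝[>] 0] fun _ => (1 : ℝ) := by
      refine (isEquivalent_const_iff_tendsto one_ne_zero).2 ?_
      simpa only [div_self ha.ne'] using hfactor.div_const a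
    simpa only [Pi.mul_def, mul_one, mul_div_assoc] using!
      ((IsEquivalent.refl (u := fun t : ℝ => t ^ (a - 1) * Real.log (1 / t) ^ q)).mul
        hfactor_equiv).symm
  · simpa only [zero_div] using
      (tendsto_rpow_mul_log_one_div_rpow_nhdsGT_zero ha q).div_const a
  · filter_upwards [hlog_pos, self_mem_nhdsWithin] with t hlog ht
    exact (hasDerivAt_rpow_mul_log_one_div_rpow a q (ne_of_gt ht) hlog.ne').div_const a
  · filter_upwards [hlog_pos, hfactor.eventually_const_lt ha, self_mem_nhdsWithin]
      with t hlog hfactor_pos (ht : 0 < t)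
    positivity

end LogPower

lemma logKernel_eventuallyEq_nhdsGT_zero (H p C : ℝ) {ζ : ℝ} (hζ : 0 < ζ) :
    logKernel H ζ p C =ᶠ[𝓝[>] 0]
      fun r => C * ζ ^ (-p) * (r ^ (H + 1/2 - 1) * Real.log (1 / r) ^ (-p)) := by
  filter_upwards [tendsto_log_one_div_nhdsGT_zero.eventually_ge_atTop 0,
    (tendsto_log_one_div_nhdsGT_zero.const_mul_atTop hζ).eventually_ge_atTop 1]
    with r hlog hζlog
  rw [logKernel, max_eq_left hζlog, Real.mul_rpow hζ.le hlog,
    show H + 1/2 - 1 = H - 1/2 by ring]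
  ring

theorem isEquivalent_integral_logKernel {H ζ : ℝ} (p C : ℝ) (hH : -(1 / 2) < H) (hζ : 0 < ζ) :
    (fun t : ℝ => ∫ s in (0 : ℝ)..t, logKernel H ζ p C s) ~[𝓝[>] 0]
      fun t => C * ζ ^ (-p) / (H + 1/2) * Real.log (1 / t) ^ (-p) * t ^ (H + 1/2) := by
  have hintegral : (fun t : ℝ => ∫ s in (0 : ℝ)..t, logKernel H ζ p C s) =ᶠ[𝓝[>] 0]
      fun t => C * ζ ^ (-p) *
        ∫ s in (0 : ℝ)..t, s ^ (H + 1/2 - 1) * Real.log (1 / s) ^ (-p) := by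
    simpa only [intervalIntegral.integral_const_mul] using
      eventuallyEq_intervalIntegral_nhdsGT (logKernel_eventuallyEq_nhdsGT_zero H p C hζ)
  have hpower := isEquivalent_integral_rpow_mul_log_one_div_rpow (a := H + 1/2) (by linarith) (-p)
  refine (((IsEquivalent.refl (u := fun _ => C * ζ ^ (-p))).mul hpower).congr_left
    hintegral.symm).congr_right (.of_eq ?_)
  ext t
  simp only [Pi.mul_apply]
  ring

theorem mean_integrated_kernel_small_time_general (H ζ p C : ℝ) (hH : -(1 / 2) < H)
    (hζ : 0 < ζ) (hC : C ≠ 0) :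
    Tendsto
      (fun t : ℝ =>
        (∫ s in (0 : ℝ)..t, logKernel H ζ p C s)
          / (C * ζ ^ (-p) / (H + 1/2) * (Real.log (1 / t)) ^ (-p) * t ^ (H + 1/2)))
      (𝓝[>] 0) (𝓝 1) := by
  refine (isEquivalent_iff_tendsto_one ?_).1 (isEquivalent_integral_logKernel p C hH hζ)
  filter_upwards [tendsto_log_one_div_nhdsGT_zero.eventually_gt_atTop 0, self_mem_nhdsWithin]
    with t hlog (ht : 0 < t)
  have hH_pos : 0 < H + 1/2 := by linarith
  positivity

theorem mean_integrated_kernel_small_time (H ζ p C : ℝ) (hH0 : 0 ≤ H) (hH : H < 1/2)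
    (hζ : 0 < ζ) (hp : 1 < p) (hC : 0 < C) :
    Tendsto
      (fun t : ℝ =>
        (∫ s in (0 : ℝ)..t, logKernel H ζ p C s)
          / (C * ζ ^ (-p) / (H + 1/2) * (Real.log (1 / t)) ^ (-p) * t ^ (H + 1/2)))
      (nhdsWithin 0 (Set.Ioi 0)) (nhds 1) :=
  mean_integrated_kernel_small_time_general H ζ p C (by linarith) hζ hC.ne'
end
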